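/- For every fixed q ≥ 2, liminf_{n→∞} [ M*_q(n;1) · (2q−1)·n / q^n ] ≥ 1; that is, M*_q(n;1) ≳ q^n / ((2q−1)·n) as n → ∞. -/

import Mathlib

/-!
Lower bound.  A transposition at `k` changes `∑ g(i) x_i` by `d (g(k+1) - g(k))`, where
`d = x_k - x_{k+1}` lies strictly between `-q` and `q`.  Hence the residue of `∑ i x_i` modulo
`2q - 1` reveals `d`, and, if `N ≥ n` is coprime to `2d` for all nonzero `|d| < q`, the residue of
`∑ i² x_i` modulo `N` then reveals `(2k+1) d` and so `k`.  Strings with prescribed residues thus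
form a code correcting one transposition (`syndrome_corrects`).  By pigeonhole some such code has
at least `q^n / ((2q-1) N)` elements, and `N = (2q)! ⌈n / (2q)!⌉ + 1` satisfies `N ~ n`.

Upper bound.  The real `liminf` is only meaningful if the sequence does not tend to `+∞`, so a bound
along a subsequence is required.  For `n = 4k + 1`, strings with at least `k` symbol changes have at
least `k` elements in their balls, so a code holds at most `q^n / k` of them by sphere packing;
the other strings are exponentially rare by a Chernoff bound (`sum_weight`, `card_few_changes`).
-/

/-- Valid locations (0-indexed) for simultaneous disjoint transpositions in a string of
length `n`: each location `k` swaps positions `k` and `k+1`, and distinct locations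
are at distance at least 2. -/
def ValidLocs (n : ℕ) (K : Finset ℕ) : Prop :=
  (∀ k ∈ K, k + 1 < n) ∧ ∀ k ∈ K, ∀ l ∈ K, k ≠ l → k + 2 ≤ l ∨ l + 2 ≤ k

/-- `y` is the result of applying the transpositions at the locations in `K` to `x`. -/
def ApplyLocs {n q : ℕ} (K : Finset ℕ) (x y : Fin n → Fin q) : Prop :=
  ∀ i : Fin n, y i =
    if h : (i : ℕ) ∈ K ∧ (i : ℕ) + 1 < n then x ⟨(i : ℕ) + 1, h.2⟩
    else if (i : ℕ) ≠ 0 ∧ (i : ℕ) - 1 ∈ K then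
      x ⟨(i : ℕ) - 1, lt_of_le_of_lt (Nat.sub_le _ _) i.isLt⟩
    else x i

/-- `B(x;t)`: the set of strings obtainable from `x` by at most `t` disjoint transpositions. -/
def BallB {n q : ℕ} (t : ℕ) (x : Fin n → Fin q) : Set (Fin n → Fin q) :=
  { y | ∃ K : Finset ℕ, K.card ≤ t ∧ ValidLocs n K ∧ ApplyLocs K x y }

/-- `dist(x,y) = min { t + s : B(x;t) ∩ B(y;s) ≠ ∅ }`, equal to `⊤` if no such `t,s` exist. -/
noncomputable def tdist {n q : ℕ} (x y : Fin n → Fin q) : ℕ∞ :=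
  sInf { d : ℕ∞ | ∃ t s : ℕ, d = ((t + s : ℕ) : ℕ∞) ∧ (BallB t x ∩ BallB s y).Nonempty }

/-- A code `C` corrects `t` transpositions. -/
def Corrects {n q : ℕ} (t : ℕ) (C : Set (Fin n → Fin q)) : Prop :=
  ∀ x ∈ C, ∀ x' ∈ C, x ≠ x' → BallB t x ∩ BallB t x' = ∅

/-- The number of runs of identical consecutive symbols in a string. -/
def runCount {n q : ℕ} (x : Fin n → Fin q) : ℕ :=
  if n = 0 then 0
  else 1 + (Finset.univ.filter (fun i : Fin (n - 1) =>
      x ⟨(i : ℕ), by have := i.isLt; omega⟩ ≠ x ⟨(i : ℕ) + 1, by have := i.isLt; omega⟩)).card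

/-- `M*_q(n;t)`: the maximum cardinality of a code in `Z_q^n` correcting `t` transpositions. -/
noncomputable def Mstar (q n t : ℕ) : ℕ :=
  sSup { m : ℕ | ∃ C : Finset (Fin n → Fin q),
    C.Nonempty ∧ Corrects t (↑C : Set (Fin n → Fin q)) ∧ C.card = m }

/-! ### Balls of radius one -/

/-- Each center `x` of a ball containing `y` is described by a location `k` and a difference `d`. -/
lemma ball_one_param {n q : ℕ} (hn : 0 < n) {x y : Fin n → Fin q} (h : y ∈ BallB 1 x) :
    ∃ (k : ℕ) (d : ℤ), k < n ∧ |d| < q ∧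
      (∀ i : Fin n, ((x i : ℕ) : ℤ) = ((y i : ℕ) : ℤ) +
        d * ((if (i : ℕ) = k then 1 else 0) - (if (i : ℕ) = k + 1 then 1 else 0))) ∧
      ∀ g : ℕ → ℤ, ∑ i : Fin n, g i * ((x i : ℕ) : ℤ) =
        ∑ i : Fin n, g i * ((y i : ℕ) : ℤ) + d * (g k - g (k + 1)) := by
  obtain ⟨K, hK, hV, hA⟩ := h
  have hq : 0 < q := lt_of_le_of_lt (Nat.zero_le _) (x ⟨0, hn⟩).isLt
  rcases Finset.card_le_one_iff_subset_singleton.mp hK with ⟨k, hk⟩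
  rcases Finset.subset_singleton_iff.mp hk with rfl | rfl
  · have hxy : y = x := by
      funext i
      have := hA i
      simpa using this
    subst hxy
    exact ⟨0, 0, hn, by simpa using hq, by simp, by simp⟩
  · have hk1 : k + 1 < n := hV.1 k (by simp)
    have hyk : y ⟨k, by omega⟩ = x ⟨k + 1, hk1⟩ := by
      have := hA ⟨k, by omega⟩
      simpa [hk1] using this
    have hyk1 : y ⟨k + 1, hk1⟩ = x ⟨k, by omega⟩ := by
      have := hA ⟨k + 1, hk1⟩
      simpa using this
    have hyo : ∀ i : Fin n, (i : ℕ) ≠ k → (i : ℕ) ≠ k + 1 → y i = x i := by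
      intro i h1 h2
      have := hA i
      have h3 : ¬ ((i : ℕ) ≠ 0 ∧ (i : ℕ) - 1 = k) := by omega
      simpa [h1, h3] using this
    have hx : ∀ i : Fin n, ((x i : ℕ) : ℤ) = ((y i : ℕ) : ℤ) +
        (((y ⟨k + 1, hk1⟩ : ℕ) : ℤ) - ((y ⟨k, by omega⟩ : ℕ) : ℤ)) *
        ((if (i : ℕ) = k then 1 else 0) - (if (i : ℕ) = k + 1 then 1 else 0)) := by
      intro i
      by_cases h1 : (i : ℕ) = k
      · have : i = ⟨k, Nat.lt_of_succ_lt hk1⟩ := Fin.ext h1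
        subst this
        rw [hyk1]
        simp
      · by_cases h2 : (i : ℕ) = k + 1
        · have : i = ⟨k + 1, hk1⟩ := Fin.ext h2
          subst this
          rw [hyk]
          simp
        · rw [hyo i h1 h2]
          simp [h1, h2]
    refine ⟨k, _, by omega, ?_, hx, ?_⟩
    · have h1 := (y ⟨k + 1, hk1⟩).isLt
      have h2 := (y ⟨k, by omega⟩).isLt
      rw [abs_lt]
      constructor <;> omega
    · intro g
      generalize (((y ⟨k + 1, hk1⟩ : ℕ) : ℤ) - ((y ⟨k, by omega⟩ : ℕ) : ℤ)) = d at hx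
      have e : ∀ l : ℕ, l < n →
          ∑ i : Fin n, g i * (d * (if (i : ℕ) = l then 1 else 0)) = d * g l := by
        intro l hl
        rw [Finset.sum_eq_single (⟨l, hl⟩ : Fin n)]
        · simp [mul_comm]
        · intro b _ hb
          have : (b : ℕ) ≠ l := fun h => hb (Fin.ext h)
          simp [this]
        · simp
      simp_rw [hx, mul_add, mul_sub, Finset.sum_add_distrib, Finset.sum_sub_distrib]
      rw [e k (by omega), e (k + 1) hk1]

/-- The ball of radius one contains every single transposition of its center. -/
lemma swap_mem_ball {n q : ℕ} (x : Fin n → Fin q) (k : ℕ) (hk : k + 1 < n) :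
    x ∘ Equiv.swap (⟨k, by omega⟩ : Fin n) ⟨k + 1, hk⟩ ∈ BallB 1 x := by
  refine ⟨{k}, by simp, ⟨by simpa using hk, by simp⟩, ?_⟩
  intro i
  by_cases h1 : (i : ℕ) = k
  · have : i = ⟨k, Nat.lt_of_succ_lt hk⟩ := Fin.ext h1
    subst this
    simp [hk]
  · by_cases h2 : (i : ℕ) = k + 1
    · have : i = ⟨k + 1, hk⟩ := Fin.ext h2
      subst this
      simp
    · have h3 : ¬ ((i : ℕ) ≠ 0 ∧ (i : ℕ) - 1 = k) := by omega
      have : Equiv.swap (⟨k, by omega⟩ : Fin n) ⟨k + 1, hk⟩ i = i :=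
        Equiv.swap_apply_of_ne_of_ne (fun h => h1 (by rw [h])) (fun h => h2 (by rw [h]))
      simp [h1, h3, this]

/-! ### The syndrome code -/

/-- The pair of residues of `∑ i x_i` modulo `2q - 1` and of `∑ i² x_i` modulo `N`. -/
def syndrome {n q : ℕ} (N : ℕ) (x : Fin n → Fin q) : ZMod (2 * q - 1) × ZMod N :=
  (((∑ i : Fin n, ((i : ℕ) : ℤ) * ((x i : ℕ) : ℤ) : ℤ) : ZMod (2 * q - 1)),
   ((∑ i : Fin n, ((i : ℕ) : ℤ) ^ 2 * ((x i : ℕ) : ℤ) : ℤ) : ZMod N))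

lemma syndrome_corrects {n q N : ℕ} (hn : 0 < n) (hN : n ≤ N)
    (hco : ∀ d : ℤ, d ≠ 0 → |d| < q → IsCoprime (N : ℤ) (2 * d))
    (C : Set (Fin n → Fin q)) (s : ZMod (2 * q - 1) × ZMod N)
    (hC : ∀ x ∈ C, syndrome N x = s) : Corrects 1 C := by
  intro x hx x' hx' hne
  by_contra hnon
  obtain ⟨y, hy, hy'⟩ := Set.nonempty_iff_ne_empty.mpr hnon
  apply hne
  obtain ⟨k, d, hk, hd, hxy, hg⟩ := ball_one_param hn hy
  obtain ⟨k', d', hk', hd', hxy', hg'⟩ := ball_one_param hn hy'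
  have hs : syndrome N x = syndrome N x' := (hC x hx).trans (hC x' hx').symm
  have hs1 := congrArg Prod.fst hs
  have hs2 := congrArg Prod.snd hs
  simp only [syndrome] at hs1 hs2
  rw [ZMod.intCast_eq_intCast_iff_dvd_sub] at hs1 hs2
  rw [hg (fun i => (i : ℤ)), hg' (fun i => (i : ℤ))] at hs1
  rw [hg (fun i => (i : ℤ) ^ 2), hg' (fun i => (i : ℤ) ^ 2)] at hs2
  have hdd : d = d' := by
    have h1 : ((2 * q - 1 : ℕ) : ℤ) ∣ d - d' := by
      convert hs1 using 1
      push_cast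
      ring
    rw [abs_lt] at hd hd'
    have h2 : d - d' = 0 := Int.eq_zero_of_abs_lt_dvd h1 (by rw [abs_lt]; constructor <;> omega)
    omega
  subst hdd
  by_cases hd0 : d = 0
  · subst hd0
    funext i
    have h1 := hxy i
    have h2 := hxy' i
    apply Fin.ext
    simp only [zero_mul, add_zero] at h1 h2
    omega
  · have hkk : k = k' := by
      have h1 : (N : ℤ) ∣ (2 * d) * ((k : ℤ) - k') := by
        convert hs2 using 1
        push_cast
        ring
      have h2 := (hco d hd0 hd).dvd_of_dvd_mul_left h1
      have h3 : (k : ℤ) - k' = 0 :=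
        Int.eq_zero_of_abs_lt_dvd h2 (by rw [abs_lt]; constructor <;> omega)
      omega
    subst hkk
    funext i
    have h1 := hxy i
    have h2 := hxy' i
    apply Fin.ext
    omega

lemma code_card_le {n q : ℕ} (C : Finset (Fin n → Fin q)) : C.card ≤ q ^ n := by
  simpa using Finset.card_le_univ C

lemma Mstar_bddAbove (q n t : ℕ) : BddAbove { m : ℕ | ∃ C : Finset (Fin n → Fin q),
    C.Nonempty ∧ Corrects t (↑C : Set (Fin n → Fin q)) ∧ C.card = m } := by
  refine ⟨q ^ n, ?_⟩
  rintro m ⟨C, -, -, rfl⟩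
  exact code_card_le C

/-- Pigeonhole over the `(2q-1) N` syndromes. -/
lemma pow_le_Mstar {n q N : ℕ} (hq : 2 ≤ q) (hn : 0 < n) (hN : n ≤ N)
    (hco : ∀ d : ℤ, d ≠ 0 → |d| < q → IsCoprime (N : ℤ) (2 * d)) :
    q ^ n ≤ (2 * q - 1) * N * Mstar q n 1 := by
  classical
  have : NeZero (2 * q - 1) := ⟨by omega⟩
  have : NeZero N := ⟨by omega⟩
  have h : ∀ s : ZMod (2 * q - 1) × ZMod N,
      (Finset.univ.filter (fun x : Fin n → Fin q => syndrome N x = s)).card ≤ Mstar q n 1 := by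
    intro s
    rcases Finset.eq_empty_or_nonempty
      (Finset.univ.filter (fun x : Fin n → Fin q => syndrome N x = s)) with h0 | h0
    · rw [h0]
      simp
    · exact le_csSup (Mstar_bddAbove q n 1)
        ⟨_, h0, syndrome_corrects hn hN hco _ s (by simp), rfl⟩
  have h2 := Finset.card_eq_sum_card_fiberwise (s := (Finset.univ : Finset (Fin n → Fin q)))
    (t := Finset.univ) (f := syndrome N) (by simp)
  have h3 := Finset.sum_le_card_nsmul Finset.univ _ _ (fun s _ => h s)
  rw [← h2] at h3
  simpa [ZMod.card, Fintype.card_prod] using h3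

/-- A modulus `N ≥ n` close to `n` and coprime to every `2d` with `0 < |d| < q`. -/
lemma exists_modulus (q n : ℕ) : ∃ N : ℕ, n ≤ N ∧ N ≤ n + (2 * q).factorial + 1 ∧
    ∀ d : ℤ, d ≠ 0 → |d| < q → IsCoprime (N : ℤ) (2 * d) := by
  set Q := (2 * q).factorial with hQ
  have hQ0 : 0 < Q := Nat.factorial_pos _
  have h1 := Nat.div_add_mod n Q
  have h2 := Nat.mod_lt n hQ0
  refine ⟨Q * (n / Q + 1) + 1, ?_, ?_, ?_⟩
  · rw [mul_add]; omega
  · rw [mul_add]; omega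
  · intro d hd hdq
    have h3 : 2 * d.natAbs ∣ Q := Nat.dvd_factorial (by omega) (by
      have : (d.natAbs : ℤ) < q := by simpa using hdq
      omega)
    have h4 : 2 * d ∣ (Q : ℤ) := by
      rw [← Int.natAbs_dvd_natAbs]
      simpa [Int.natAbs_mul] using h3
    obtain ⟨c, hc⟩ := h4
    refine ⟨1, -(c * ((n / Q : ℕ) + 1)), ?_⟩
    push_cast
    rw [hc]
    ring

/-! ### Sphere packing along a subsequence -/

/-- The set of positions at which a string of length `m + 1` changes symbol. -/
def changes {m q : ℕ} (x : Fin (m + 1) → Fin q) : Finset (Fin m) :=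
  Finset.univ.filter (fun k => x k.castSucc ≠ x k.succ)

/-- Transpositions at distinct changes give distinct strings, so a packing argument applies. -/
lemma packing {m q : ℕ} (C : Finset (Fin (m + 1) → Fin q))
    (hC : Corrects 1 (↑C : Set (Fin (m + 1) → Fin q))) :
    ∑ x ∈ C, (changes x).card ≤ q ^ (m + 1) := by
  classical
  let F : (Fin (m + 1) → Fin q) → Fin m → (Fin (m + 1) → Fin q) :=
    fun x k => x ∘ Equiv.swap k.castSucc k.succ
  have hF : ∀ x k, F x k ∈ BallB 1 x := fun x k =>
    swap_mem_ball x k (by have := k.isLt; omega)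
  have hinj : ∀ x, Set.InjOn (F x) (changes x : Set (Fin m)) := by
    intro x
    -- at its first position `k`, the transposition at `k` differs from any one further right
    have key : ∀ k l : Fin m, k < l → x k.castSucc ≠ x k.succ → F x k ≠ F x l := by
      intro k l hkl hk h
      have h1 := congrFun h k.castSucc
      have h2 : Equiv.swap l.castSucc l.succ k.castSucc = k.castSucc :=
        Equiv.swap_apply_of_ne_of_ne
          (by rw [Ne, Fin.ext_iff]; simp; omega) (by rw [Ne, Fin.ext_iff]; simp; omega)
      simp only [F, Function.comp_apply, Equiv.swap_apply_left, h2] at h1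
      exact hk h1.symm
    intro k hk l hl h
    simp only [changes, Finset.coe_filter, Finset.mem_univ, true_and, Set.mem_ofPred_eq] at hk hl
    rcases lt_trichotomy k l with h1 | h1 | h1
    · exact absurd h (key k l h1 hk)
    · exact h1
    · exact absurd h.symm (key l k h1 hl)
  calc ∑ x ∈ C, (changes x).card = ∑ x ∈ C, ((changes x).image (F x)).card :=
        Finset.sum_congr rfl (fun x _ => (Finset.card_image_of_injOn (hinj x)).symm)
    _ = (C.biUnion (fun x => (changes x).image (F x))).card := by
        rw [Finset.card_biUnion]
        intro x hx x' hx' hne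
        rw [Function.onFun, Finset.disjoint_left]
        intro y hy hy'
        obtain ⟨k, -, rfl⟩ := Finset.mem_image.mp hy
        obtain ⟨l, -, hl⟩ := Finset.mem_image.mp hy'
        have : F x k ∈ BallB 1 x ∩ BallB 1 x' := ⟨hF x k, hl ▸ hF x' l⟩
        rw [hC x hx x' hx' hne] at this
        exact this
    _ ≤ q ^ (m + 1) := code_card_le _

/-- The generating function of the number of changes, at `1/2`. -/
lemma sum_weight (q m : ℕ) :
    ∑ x : Fin (m + 1) → Fin q, ∏ k : Fin m, (if x k.castSucc = x k.succ then (1 : ℝ) else 1 / 2)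
      = q * (((q : ℝ) + 1) / 2) ^ m := by
  induction m with
  | zero => simp
  | succ m ih =>
    rw [← (Fin.consEquiv (fun _ : Fin (m + 2) => Fin q)).sum_comp, Fintype.sum_prod_type,
      Finset.sum_comm]
    have h : ∀ b : Fin q, ∑ a : Fin q, (if a = b then (1 : ℝ) else 1 / 2) = ((q : ℝ) + 1) / 2 := by
      intro b
      have : ∀ a : Fin q, (if a = b then (1 : ℝ) else 1 / 2)
          = 1 / 2 + (if a = b then 1 / 2 else 0) := by
        intro a; split_ifs <;> norm_num
      simp_rw [this, Finset.sum_add_distrib]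
      simp
      ring
    simp_rw [Fin.prod_univ_succ, Fin.consEquiv_apply, Fin.castSucc_zero, ← Fin.succ_castSucc,
      Fin.cons_zero, Fin.cons_succ]
    simp_rw [← Finset.sum_mul, h]
    rw [← Finset.mul_sum, ih]
    ring

/-- A Chernoff bound for strings with fewer than a quarter of the possible changes. -/
lemma card_few_changes (q k : ℕ) (hq : 2 ≤ q) :
    ((Finset.univ.filter (fun x : Fin (4 * k + 1) → Fin q => (changes x).card < k)).card : ℝ)
      ≤ (q : ℝ) ^ (4 * k + 1) * (81 / 128) ^ k := by
  have hw : ∀ x : Fin (4 * k + 1) → Fin q,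
      ∏ j : Fin (4 * k), (if x j.castSucc = x j.succ then (1 : ℝ) else 1 / 2)
        = (1 / 2) ^ (changes x).card := by
    intro x
    rw [Finset.prod_ite]
    simp [changes]
  have h1 : ((Finset.univ.filter
      (fun x : Fin (4 * k + 1) → Fin q => (changes x).card < k)).card : ℝ) * (1 / 2) ^ k
      ≤ q * (((q : ℝ) + 1) / 2) ^ (4 * k) := by
    rw [← sum_weight]
    simp_rw [hw]
    calc _ = ∑ x ∈ Finset.univ.filter
          (fun x : Fin (4 * k + 1) → Fin q => (changes x).card < k), ((1 : ℝ) / 2) ^ k := by simp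
      _ ≤ ∑ x ∈ Finset.univ.filter
          (fun x : Fin (4 * k + 1) → Fin q => (changes x).card < k),
            ((1 : ℝ) / 2) ^ (changes x).card := by
          apply Finset.sum_le_sum
          intro x hx
          exact pow_le_pow_of_le_one (by norm_num) (by norm_num) (Finset.mem_filter.mp hx).2.le
      _ ≤ _ := Finset.sum_le_sum_of_subset_of_nonneg (Finset.subset_univ _)
          (fun _ _ _ => by positivity)
  have hq' : (2 : ℝ) ≤ q := by exact_mod_cast hq
  have h2 : (((q : ℝ) + 1) / 2) ^ (4 * k) ≤ (3 / 4 * (q : ℝ)) ^ (4 * k) :=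
    pow_le_pow_left₀ (by positivity) (by linarith) _
  have h3 : (q : ℝ) * (3 / 4 * (q : ℝ)) ^ (4 * k)
      = ((q : ℝ) ^ (4 * k + 1) * (81 / 128) ^ k) * (1 / 2) ^ k := by
    rw [mul_assoc, ← mul_pow, mul_pow, pow_mul (3 / 4 : ℝ), pow_succ]
    norm_num
    ring
  have h4 := h1.trans ((mul_le_mul_of_nonneg_left h2 (by positivity)).trans h3.le)
  exact le_of_mul_le_mul_right h4 (by positivity)

lemma code_upper (q k : ℕ) (hq : 2 ≤ q) (hk : 0 < k) (C : Finset (Fin (4 * k + 1) → Fin q))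
    (hC : Corrects 1 (↑C : Set (Fin (4 * k + 1) → Fin q))) :
    (C.card : ℝ) * k ≤ 3 * (q : ℝ) ^ (4 * k + 1) := by
  have hsplit := Finset.card_filter_add_card_filter_not (s := C)
    (fun x => (changes x).card < k)
  have hfew : ((C.filter (fun x => (changes x).card < k)).card : ℝ)
      ≤ (q : ℝ) ^ (4 * k + 1) * (81 / 128) ^ k := by
    refine le_trans ?_ (card_few_changes q k hq)
    exact_mod_cast Finset.card_le_card (Finset.filter_subset_filter _ (Finset.subset_univ _))
  have hmany : (C.filter (fun x => ¬ (changes x).card < k)).card * k ≤ q ^ (4 * k + 1) := by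
    refine le_trans ?_ (packing C hC)
    refine le_trans ?_ (Finset.sum_le_sum_of_subset (Finset.filter_subset
      (fun x => ¬ (changes x).card < k) C))
    rw [← smul_eq_mul]
    apply Finset.card_nsmul_le_sum
    intro x hx
    have := (Finset.mem_filter.mp hx).2
    omega
  have hmany' : ((C.filter (fun x => ¬ (changes x).card < k)).card : ℝ) * k
      ≤ (q : ℝ) ^ (4 * k + 1) := by exact_mod_cast hmany
  -- Bernoulli's inequality: `(128/81)^k ≥ 1 + 47k/81 ≥ k/2`
  have hb : (81 / 128 : ℝ) ^ k * k ≤ 2 := by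
    have h1 := one_add_mul_le_pow (a := (47 / 81 : ℝ)) (by norm_num) k
    have h2 : (81 / 128 : ℝ) ^ k * (1 + 47 / 81) ^ k = 1 := by
      rw [← mul_pow]; norm_num
    have h3 : (0 : ℝ) < (81 / 128 : ℝ) ^ k := by positivity
    have h4 := mul_le_mul_of_nonneg_left h1 h3.le
    rw [h2] at h4
    have h5 : (0 : ℝ) ≤ (81 / 128 : ℝ) ^ k * k := by positivity
    nlinarith
  have hc : (C.card : ℝ) = ((C.filter (fun x => (changes x).card < k)).card : ℝ)
      + ((C.filter (fun x => ¬ (changes x).card < k)).card : ℝ) := by exact_mod_cast hsplit.symm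
  rw [hc, add_mul]
  have h6 := mul_le_mul_of_nonneg_right hfew (Nat.cast_nonneg (α := ℝ) k)
  have h7 : (0 : ℝ) ≤ (q : ℝ) ^ (4 * k + 1) := by positivity
  have h8 := mul_le_mul_of_nonneg_left hb h7
  nlinarith

lemma Mstar_upper (q k : ℕ) (hq : 2 ≤ q) (hk : 0 < k) :
    (Mstar q (4 * k + 1) 1 : ℝ) * k ≤ 3 * (q : ℝ) ^ (4 * k + 1) := by
  have hne : { m : ℕ | ∃ C : Finset (Fin (4 * k + 1) → Fin q), C.Nonempty ∧
      Corrects 1 (↑C : Set (Fin (4 * k + 1) → Fin q)) ∧ C.card = m }.Nonempty := by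
    refine ⟨1, {fun _ => ⟨0, by omega⟩}, by simp, ?_, by simp⟩
    intro x hx x' hx' h
    simp only [Finset.coe_singleton, Set.mem_singleton_iff] at hx hx'
    exact absurd (hx.trans hx'.symm) h
  obtain ⟨C, -, hC, hcard⟩ := Nat.sSup_mem hne (Mstar_bddAbove q (4 * k + 1) 1)
  have := code_upper q k hq hk C hC
  rw [hcard] at this
  exact this

theorem stmt11 (q : ℕ) (hq : 2 ≤ q) :
    1 ≤ Filter.liminf
      (fun n : ℕ => (Mstar q n 1 : ℝ) * (2 * (q : ℝ) - 1) * n / (q : ℝ) ^ n)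
      Filter.atTop := by
  have hq' : (2 : ℝ) ≤ q := by exact_mod_cast hq
  set Q : ℝ := ((2 * q).factorial : ℝ) + 1 with hQ
  have hQ0 : 0 < Q := by positivity
  have htend : Filter.Tendsto (fun n : ℕ => (n : ℝ) / (n + Q)) Filter.atTop (nhds 1) :=
    tendsto_natCast_div_add_atTop Q
  have hlow : ∀ᶠ n : ℕ in Filter.atTop, (n : ℝ) / (n + Q) ≤
      (Mstar q n 1 : ℝ) * (2 * (q : ℝ) - 1) * n / (q : ℝ) ^ n := by
    filter_upwards [Filter.eventually_gt_atTop 0] with n hn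
    obtain ⟨N, hN1, hN2, hco⟩ := exists_modulus q n
    have h1 := pow_le_Mstar hq hn hN1 hco
    have h2 : (q : ℝ) ^ n ≤ (2 * (q : ℝ) - 1) * N * Mstar q n 1 := by
      have h3 : ((2 * q - 1 : ℕ) : ℝ) = 2 * (q : ℝ) - 1 := by
        rw [Nat.cast_sub (by omega)]; simp
      rw [← h3]
      exact_mod_cast h1
    have hN3 : (N : ℝ) ≤ n + Q := by
      rw [hQ, ← add_assoc]
      exact_mod_cast hN2
    have h4 : (q : ℝ) ^ n ≤ (2 * (q : ℝ) - 1) * (n + Q) * Mstar q n 1 := by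
      refine h2.trans ?_
      have : (0 : ℝ) ≤ 2 * (q : ℝ) - 1 := by linarith
      gcongr
    rw [div_le_div_iff₀ (by positivity) (by positivity)]
    have h5 := mul_le_mul_of_nonneg_left h4 (Nat.cast_nonneg (α := ℝ) n)
    linarith
  have hfreq : ∃ᶠ n : ℕ in Filter.atTop,
      (Mstar q n 1 : ℝ) * (2 * (q : ℝ) - 1) * n / (q : ℝ) ^ n ≤ 15 * (2 * (q : ℝ) - 1) := by
    rw [Filter.frequently_atTop]
    intro a
    refine ⟨4 * (a + 1) + 1, by omega, ?_⟩
    have h1 := Mstar_upper q (a + 1) hq (by omega)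
    rw [div_le_iff₀ (by positivity)]
    have h2 : (0 : ℝ) ≤ 2 * (q : ℝ) - 1 := by linarith
    have h3 : ((4 * (a + 1) + 1 : ℕ) : ℝ) ≤ 5 * ((a + 1 : ℕ) : ℝ) := by
      push_cast
      have : (0 : ℝ) ≤ a := Nat.cast_nonneg a
      linarith
    calc (Mstar q (4 * (a + 1) + 1) 1 : ℝ) * (2 * (q : ℝ) - 1) * ((4 * (a + 1) + 1 : ℕ) : ℝ)
        ≤ (Mstar q (4 * (a + 1) + 1) 1 : ℝ) * (2 * (q : ℝ) - 1) * (5 * ((a + 1 : ℕ) : ℝ)) := by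
          gcongr
      _ = 5 * (2 * (q : ℝ) - 1) * ((Mstar q (4 * (a + 1) + 1) 1 : ℝ) * ((a + 1 : ℕ) : ℝ)) := by
          ring
      _ ≤ 5 * (2 * (q : ℝ) - 1) * (3 * (q : ℝ) ^ (4 * (a + 1) + 1)) := by gcongr
      _ = _ := by ring
  calc (1 : ℝ) = Filter.liminf (fun n : ℕ => (n : ℝ) / (n + Q)) Filter.atTop :=
        htend.liminf_eq.symm
    _ ≤ _ := Filter.liminf_le_liminf hlow htend.isBoundedUnder_ge
        (Filter.IsCoboundedUnder.of_frequently_le hfreq)
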